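/- Let V be a vector space over a field K, let L_0, L_1, …, L_p be linear endomorphisms of V, and let v ∈ V. For a subset S ⊆ V let O(S) denote the linear span of all vectors L_{j_1}∘…∘L_{j_n}(s) with n ≥ 0, j_1,…,j_n ∈ {1,…,p} and s ∈ S (the case n = 0 giving s itself). Define S_0 = O({v}) and recursively S_k = O(L_0(S_{k−1})) for k ≥ 1. Then the linear span of the set {L_{j_1}∘…∘L_{j_n}(v) : n ≥ 0, j_1,…,j_n ∈ {0,1,…,p}} equals the supremum (internal sum) of the subspaces S_k over all k ≥ 0. -/

import Mathlib

/-!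
Both sides are the least subspace that contains `v` and is stable under `L0` and all `L i`.
The span of all words is stable because prepending a letter to a word gives a word. The supremum
of the `S_k` is stable because each `S_k` is stable under every `L i` (`map_mem_Sk`), while `L0`
maps `S_k` into `S_{k+1}`. Minimality is an induction on the word on the left, and on `k` on the
right, where each `S_k` is itself a least subspace stable under the `L i` (`Oset_le`).
-/

/-- `Oset K L S` is the linear span of all vectors `L_{j₁} ∘ ⋯ ∘ L_{jₙ} s` with `n ≥ 0`,
`j₁, …, jₙ ∈ {1, …, p}` (encoded as `Fin p`) and `s ∈ S` (the case `n = 0` giving `s` itself). -/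
noncomputable def Oset (K : Type*) {V : Type*} [Field K] [AddCommGroup V] [Module K V]
    {p : ℕ} (L : Fin p → Module.End K V) (S : Set V) : Submodule K V :=
  Submodule.span K {x | ∃ (w : List (Fin p)) (s : V), s ∈ S ∧ ((w.map L).prod) s = x}

/-- The subspaces `S_0 = O({v})`, `S_k = O(L₀(S_{k-1}))`. -/
noncomputable def Sk (K : Type*) {V : Type*} [Field K] [AddCommGroup V] [Module K V]
    {p : ℕ} (L0 : Module.End K V) (L : Fin p → Module.End K V) (v : V) : ℕ → Submodule K V
  | 0 => Oset K L {v}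
  | (k + 1) => Oset K L (L0 '' (Sk K L0 L v k))

theorem subset_Oset {K V : Type*} [Field K] [AddCommGroup V] [Module K V] {p : ℕ}
    (L : Fin p → Module.End K V) (S : Set V) : S ⊆ Oset K L S :=
  fun s hs => Submodule.subset_span ⟨[], s, hs, by simp⟩

theorem map_mem_Oset {K V : Type*} [Field K] [AddCommGroup V] [Module K V] {p : ℕ}
    (L : Fin p → Module.End K V) (S : Set V) (i : Fin p) {x : V} (hx : x ∈ Oset K L S) :
    L i x ∈ Oset K L S := by
  suffices h : Oset K L S ≤ (Oset K L S).comap (L i) from h hx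
  refine Submodule.span_le.2 ?_
  rintro _ ⟨w, s, hs, rfl⟩
  exact Submodule.subset_span ⟨i :: w, s, hs, by simp⟩

/-- `Oset K L S` is the least subspace that contains `S` and is stable under every `L i`. -/
theorem Oset_le {K V : Type*} [Field K] [AddCommGroup V] [Module K V] {p : ℕ}
    (L : Fin p → Module.End K V) {S : Set V} {M : Submodule K V} (hS : S ⊆ M)
    (hM : ∀ i, ∀ x ∈ M, L i x ∈ M) : Oset K L S ≤ M := by
  refine Submodule.span_le.2 ?_
  rintro _ ⟨w, s, hs, rfl⟩
  induction w with
  | nil => simpa using hS hs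
  | cons i w ih => simpa using hM i _ ih

theorem map_mem_Sk {K V : Type*} [Field K] [AddCommGroup V] [Module K V] {p : ℕ}
    (L0 : Module.End K V) (L : Fin p → Module.End K V) (v : V) (k : ℕ) (i : Fin p) {x : V}
    (hx : x ∈ Sk K L0 L v k) : L i x ∈ Sk K L0 L v k := by
  cases k <;> exact map_mem_Oset L _ i hx

/-- The linear span of all vectors `L_{j₁} ∘ ⋯ ∘ L_{jₙ} v` with `n ≥ 0` and
`j₁, …, jₙ ∈ {0, 1, …, p}` equals the supremum of the subspaces `S_k` over all `k ≥ 0`. -/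
theorem span_words_eq_iSup_Sk (K : Type*) {V : Type*} [Field K] [AddCommGroup V] [Module K V]
    (p : ℕ) (L0 : Module.End K V) (L : Fin p → Module.End K V) (v : V) :
    Submodule.span K
        {x | ∃ w : List (Fin (p + 1)), ((w.map (Fin.cases L0 L)).prod) v = x}
      = ⨆ k, Sk K L0 L v k := by
  apply le_antisymm
  · refine Submodule.span_le.2 ?_
    rintro _ ⟨w, rfl⟩
    induction w with
    | nil =>
      have h : v ∈ Sk K L0 L v 0 := subset_Oset L {v} rfl
      simpa using Submodule.mem_iSup_of_mem 0 h
    | cons j w ih =>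
      rw [List.map_cons, List.prod_cons, Module.End.mul_apply]
      generalize (w.map (Fin.cases L0 L)).prod v = y at ih ⊢
      suffices h : (⨆ k, Sk K L0 L v k) ≤
          (⨆ k, Sk K L0 L v k).comap (Fin.cases L0 L j : Module.End K V) from h ih
      refine iSup_le fun k x hx => ?_
      cases j using Fin.cases with
      | zero =>
        have h : L0 x ∈ Sk K L0 L v (k + 1) := subset_Oset L _ ⟨x, hx, rfl⟩
        exact Submodule.mem_iSup_of_mem (k + 1) h
      | succ i => exact Submodule.mem_iSup_of_mem k (map_mem_Sk L0 L v k i hx)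
  · set M := Submodule.span K
      {x | ∃ w : List (Fin (p + 1)), ((w.map (Fin.cases L0 L)).prod) v = x} with hMdef
    have hM : ∀ j : Fin (p + 1), M ≤ M.comap (Fin.cases L0 L j : Module.End K V) := by
      intro j
      refine Submodule.span_le.2 ?_
      rintro _ ⟨w, rfl⟩
      exact Submodule.subset_span ⟨j :: w, by simp⟩
    have hL : ∀ i, ∀ x ∈ M, L i x ∈ M := fun i x hx => hM i.succ hx
    refine iSup_le fun k => ?_
    induction k with
    | zero =>
      refine Oset_le L ?_ hL
      rintro _ rfl
      exact Submodule.subset_span ⟨[], by simp⟩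
    | succ k ih =>
      refine Oset_le L ?_ hL
      rintro _ ⟨x, hx, rfl⟩
      exact hM 0 (ih hx)
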